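/- arXiv:1807.10812 — 3 statements merged into one kernel-verified Lean document; each statement's English description precedes it below -/
import Mathlib

section
/- Let p be a prime and let f ∈ ℤ[[t]] be a formal power series with integer coefficients. If the image of f in ℚ_p[[t]] is the expansion of a rational function (i.e. there exist polynomials g, h ∈ ℚ_p[t] with h ≠ 0 and h·f = g in ℚ_p[[t]]), then f is the expansion of a rational function over ℚ (there exist g′, h′ ∈ ℚ[t] with h′ ≠ 0 and h′·f = g′ in ℚ[[t]]). In other words, ℤ[[t]] ∩ ℚ_p(t) ⊆ ℚ(t). -/
/-- Applying a `ℚ`-linear functional to the coefficients of a polynomial. -/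
theorem exists_poly_coeff_functional {K : Type*} [Field K] [Algebra ℚ K]
    (φ : K →ₗ[ℚ] ℚ) (q : Polynomial K) :
    ∃ q' : Polynomial ℚ, ∀ n, q'.coeff n = φ (q.coeff n) := by
  refine ⟨∑ i ∈ Finset.range (q.natDegree + 1), Polynomial.monomial i (φ (q.coeff i)), ?_⟩
  intro n
  simp only [Polynomial.finset_sum_coeff, Polynomial.coeff_monomial, Finset.sum_ite_eq',
    Finset.mem_range]
  split_ifs with hn
  · rfl
  · rw [Polynomial.coeff_eq_zero_of_natDegree_lt (by omega), map_zero]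

/-- **`ℤ[[t]] ∩ ℚ_p(t) ⊆ ℚ(t)`**.
If a power series with integer coefficients is the expansion of a rational function
over the `p`-adic numbers `ℚ_p`, then it is the expansion of a rational function
over `ℚ`. -/
theorem int_powerSeries_rational_of_padic_rational
    (p : ℕ) [Fact p.Prime] (f : PowerSeries ℤ)
    (h : ∃ g h : Polynomial ℚ_[p], h ≠ 0 ∧
      (h : PowerSeries ℚ_[p]) * f.map (Int.castRingHom ℚ_[p]) = (g : PowerSeries ℚ_[p])) :
    ∃ g' h' : Polynomial ℚ, h' ≠ 0 ∧
      (h' : PowerSeries ℚ) * f.map (Int.castRingHom ℚ) = (g' : PowerSeries ℚ) := by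
  obtain ⟨g, h, hne, heq⟩ := h
  have hc : h.leadingCoeff ≠ 0 := Polynomial.leadingCoeff_ne_zero.mpr hne
  obtain ⟨φ, hφ⟩ : ∃ φ : ℚ_[p] →ₗ[ℚ] ℚ, φ h.leadingCoeff ≠ 0 := by
    by_contra! hall
    exact hc ((Module.forall_dual_apply_eq_zero_iff ℚ _).mp hall)
  obtain ⟨g', hg'⟩ := exists_poly_coeff_functional φ g
  obtain ⟨h', hh'⟩ := exists_poly_coeff_functional φ h
  refine ⟨g', h', ?_, ?_⟩
  · rintro rfl
    exact hφ (by rw [Polynomial.leadingCoeff, ← hh', Polynomial.coeff_zero])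
  · ext n
    have hn := congrArg (fun s => φ (PowerSeries.coeff n s)) heq
    simp only [PowerSeries.coeff_mul, PowerSeries.coeff_map, Polynomial.coeff_coe, map_sum,
      eq_intCast] at hn ⊢
    rw [hg', ← hn]
    refine Finset.sum_congr rfl fun x _ => ?_
    rw [hh', mul_comm (h.coeff x.1), ← zsmul_eq_mul, map_zsmul, zsmul_eq_mul, mul_comm]
end

section
/- Let F be a field, Q ≥ 1 an integer, and (δ_j)_{1≤j≤Q}, (ε_j)_{1≤j≤Q} two families of nonzero elements of F. Let K be a finite set of natural numbers, each ≠ 1. Suppose that for all sufficiently large n not divisible by any k ∈ K, the multiset {δ_1^n, …, δ_Q^n} equals the multiset {ε_1^n, …, ε_Q^n}. Then the multiset {δ_1, …, δ_Q} equals the multiset {ε_1, …, ε_Q}. -/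
/-- **Recovering a family from its power families** (Lemma 12).
Let `δ`, `ε` be two families of `Q ≥ 1` nonzero elements of a field `F` and `K` a
finite set of naturals, none equal to `1`.  If for all sufficiently large `n` not
divisible by any `k ∈ K` the multisets `{δⱼⁿ}` and `{εⱼⁿ}` coincide, then the
multisets `{δⱼ}` and `{εⱼ}` coincide. -/
theorem multiset_eq_of_pow_multiset_eq
    (F : Type) [Field F] (Q : ℕ) (hQ : 1 ≤ Q)
    (δ ε : Fin Q → F)
    (hδ : ∀ j, δ j ≠ 0) (hε : ∀ j, ε j ≠ 0)
    (K : Finset ℕ) (hK : ∀ k ∈ K, k ≠ 1)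
    (h : ∃ n₀ : ℕ, ∀ n : ℕ, n₀ ≤ n → (∀ k ∈ K, ¬ k ∣ n) →
      Multiset.map (fun j => δ j ^ n) Finset.univ.val
        = Multiset.map (fun j => ε j ^ n) Finset.univ.val) :
    Multiset.map δ Finset.univ.val = Multiset.map ε Finset.univ.val := by
  classical
  obtain ⟨n₀, h⟩ := h
  set S : Finset F := Finset.univ.image δ ∪ Finset.univ.image ε with hS
  have hδS : ∀ j, δ j ∈ S := fun j => by simp [hS]
  have hεS : ∀ j, ε j ∈ S := fun j => by simp [hS]
  have hS0 : ∀ x ∈ S, x ≠ 0 := by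
    intro x hx
    simp only [hS, Finset.mem_union, Finset.mem_image, Finset.mem_univ, true_and] at hx
    rcases hx with ⟨j, rfl⟩ | ⟨j, rfl⟩
    · exact hδ j
    · exact hε j
  set T : Finset ℕ :=
    (K ∪ (S ×ˢ S).image (fun p => orderOf (p.1 / p.2))).erase 0 with hT
  set M : ℕ := ∏ k ∈ T, k with hM
  have hM0 : 0 < M := Finset.prod_pos fun k hk =>
    Nat.pos_of_ne_zero (Finset.ne_of_mem_erase hk)
  set n : ℕ := 1 + M * (n₀ + 1) with hn
  have hnn : n₀ ≤ n := by nlinarith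
  have hn0 : n ≠ 0 := by omega
  have hKn : ∀ k ∈ K, ¬ k ∣ n := by
    intro k hk hd
    have hk0 : k ≠ 0 := by
      rintro rfl
      exact hn0 (Nat.eq_zero_of_zero_dvd hd)
    have hkM : k ∣ M := Finset.dvd_prod_of_mem (fun k => k)
      (Finset.mem_erase.2 ⟨hk0, Finset.mem_union_left _ hk⟩)
    have h1 : k ∣ 1 := (Nat.dvd_add_left (hkM.mul_right _)).1 hd
    exact hK k hk (Nat.dvd_one.1 h1)
  have hinj : Set.InjOn (fun x : F => x ^ n) (S : Set F) := by
    intro x hx y hy hxy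
    have hy0 := hS0 y hy
    have hr : (x / y) ^ n = 1 := by
      rw [div_pow, show x ^ n = y ^ n from hxy, div_self (pow_ne_zero _ hy0)]
    have ho : orderOf (x / y) ∣ n := orderOf_dvd_of_pow_eq_one hr
    have ho0 : orderOf (x / y) ≠ 0 := by
      intro h0
      rw [h0] at ho
      exact hn0 (Nat.eq_zero_of_zero_dvd ho)
    have hoM : orderOf (x / y) ∣ M := Finset.dvd_prod_of_mem (fun k => k)
      (Finset.mem_erase.2 ⟨ho0, Finset.mem_union_right _
        (Finset.mem_image.2 ⟨(x, y), Finset.mem_product.2 ⟨hx, hy⟩, rfl⟩)⟩)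
    have h1 : orderOf (x / y) ∣ 1 := (Nat.dvd_add_left (hoM.mul_right _)).1 ho
    have h2 : x / y = 1 := orderOf_eq_one_iff.1 (Nat.dvd_one.1 h1)
    exact (div_eq_one_iff_eq hy0).1 h2
  have hl := hinj.leftInvOn_invFunOn
  have key := congrArg (Multiset.map (Function.invFunOn (fun x : F => x ^ n) (S : Set F)))
    (h n hnn hKn)
  rw [Multiset.map_map, Multiset.map_map] at key
  have e1 : ∀ j, Function.invFunOn (fun x : F => x ^ n) (S : Set F) (δ j ^ n) = δ j :=
    fun j => hl (hδS j)
  have e2 : ∀ j, Function.invFunOn (fun x : F => x ^ n) (S : Set F) (ε j ^ n) = ε j :=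
    fun j => hl (hεS j)
  simpa only [Function.comp_def, e1, e2] using key
end

section
/- Let k be a field, V a k-vector space, B : V × V → k a bilinear form, S a nonempty set, and for each s ∈ S let δ_s ∈ V be a nonzero vector and ε_s ∈ {1,−1}. Define T_s(x) = x + ε_s·B(x,δ_s)·δ_s, assume each T_s is bijective, let G ≤ GL(V) be generated by the T_s, and let E = span{δ_s : s ∈ S}. Assume moreover that the vanishing cycles are conjugate up to sign: for all s, s′ ∈ S there exists g ∈ G with g·δ_s = δ_{s′} or g·δ_s = −δ_{s′}. Then every G-stable subspace F of E either is contained in E ∩ E^⊥ or equals E, where E^⊥ = {x ∈ V : B(x,δ_s) = 0 for all s ∈ S}. -/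
/-- **Irreducibility of the monodromy action on `E/(E ∩ E^⊥)`** (Corollary 3, abstract
form).  With `G` the group generated by the transvections
`T_s(x) = x + ε_s·B(x, δ_s)·δ_s` and `E` the span of the nonzero vectors `δ_s`
(`S ≠ ∅`), if the `δ_s` are `G`-conjugate up to sign, then every `G`-stable subspace
`F ⊆ E` is contained in `E ∩ E^⊥` or equals `E`, where
`E^⊥ = {x | B(x, δ_s) = 0 ∀ s}`. -/
theorem monodromy_irreducible_on_vanishing_part
    (k : Type) [Field k] (V : Type) [AddCommGroup V] [Module k V]
    (B : V →ₗ[k] V →ₗ[k] k)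
    (S : Type) [Nonempty S] (δ : S → V) (hδ : ∀ s, δ s ≠ 0)
    (ε : S → k) (hε : ∀ s, ε s = 1 ∨ ε s = -1)
    (T : S → (V →ₗ[k] V))
    (hT : ∀ s, T s = LinearMap.id + ε s • LinearMap.smulRight (B.flip (δ s)) (δ s))
    (hbij : ∀ s, Function.Bijective (T s))
    (G : Subgroup (V ≃ₗ[k] V))
    (hG : G = Subgroup.closure
      (Set.range fun s => LinearEquiv.ofBijective (T s) (hbij s)))
    (E : Submodule k V) (hE : E = Submodule.span k (Set.range δ))
    (Eperp : Submodule k V) (hEperp : Eperp = ⨅ s, LinearMap.ker (B.flip (δ s)))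
    (hconj : ∀ s s' : S, ∃ g ∈ G, g (δ s) = δ s' ∨ g (δ s) = -δ s') :
    ∀ F : Submodule k V, F ≤ E → (∀ g ∈ G, ∀ x ∈ F, g x ∈ F) →
      F ≤ E ⊓ Eperp ∨ F = E := by
  intro F hFE hF
  by_cases h : ∀ x ∈ F, ∀ s, B x (δ s) = 0
  · left
    refine le_inf hFE fun x hx => ?_
    rw [hEperp, Submodule.mem_iInf]
    intro s
    rw [LinearMap.mem_ker, LinearMap.flip_apply]
    exact h x hx s
  · right
    push Not at h
    obtain ⟨x, hx, s, hs⟩ := h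
    refine le_antisymm hFE ?_
    have hmem : LinearEquiv.ofBijective (T s) (hbij s) ∈ G := by
      rw [hG]
      exact Subgroup.subset_closure ⟨s, rfl⟩
    have h1 := F.sub_mem (hF _ hmem x hx) hx
    have h2 : LinearEquiv.ofBijective (T s) (hbij s) x - x = (ε s * B x (δ s)) • δ s := by
      rw [LinearEquiv.ofBijective_apply, hT s]
      simp [mul_smul]
    have hε0 : ε s ≠ 0 := by
      rcases hε s with h | h <;> simp [h]
    rw [h2] at h1
    have h3 : δ s ∈ F := (F.smul_mem_iff (mul_ne_zero hε0 hs)).1 h1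
    rw [hE, Submodule.span_le]
    rintro _ ⟨s', rfl⟩
    obtain ⟨g, hg, h | h⟩ := hconj s s'
    · have := hF g hg _ h3
      rwa [h] at this
    · have := hF g hg _ h3
      rw [h] at this
      exact F.neg_mem_iff.1 this
end
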